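/- For every complex number q with |q| < 1, the sum over all nonnegative integers j of q^(2j^2) · (q; q^2)_j · (-q^(2j+1); q)_∞ / ((q^2; q^2)_j) equals the product over all positive integers j of (1 − q^(3j))(1 − q^(6j−3))/(1 − q^j). -/

import Mathlib

/-- The finite q-Pochhammer symbol `(a; q)_n = ∏_{h=0}^{n-1} (1 - a q^h)`. -/
noncomputable def qPoch (a q : ℂ) (n : ℕ) : ℂ := ∏ h ∈ Finset.range n, (1 - a * q ^ h)

/-- The infinite q-Pochhammer symbol `(a; q)_∞ = ∏_{h=0}^{∞} (1 - a q^h)`. -/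
noncomputable def qPochInf (a q : ℂ) : ℂ := ∏' h : ℕ, (1 - a * q ^ h)

open Finset Filter Topology

noncomputable def invP (Q : ℂ) (n : ℕ) : ℂ := (qPoch Q Q n)⁻¹

lemma one_sub_pow_ne {Q : ℂ} (hQ : ‖Q‖ < 1) (n : ℕ) : 1 - Q ^ (n + 1) ≠ 0 := by
  intro h
  have h1 : Q ^ (n + 1) = 1 := (sub_eq_zero.mp h).symm
  have h2 : ‖Q‖ ^ (n + 1) = 1 := by rw [← norm_pow, h1, norm_one]
  have h3 : ‖Q‖ ^ (n + 1) < 1 := pow_lt_one₀ (norm_nonneg _) hQ (Nat.succ_ne_zero n)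
  linarith

lemma qPoch_self_ne {Q : ℂ} (hQ : ‖Q‖ < 1) (n : ℕ) : qPoch Q Q n ≠ 0 := by
  unfold qPoch
  refine Finset.prod_ne_zero_iff.mpr fun h _ => ?_
  have := one_sub_pow_ne hQ h
  rwa [pow_succ'] at this

lemma invP_rec {Q : ℂ} (hQ : ‖Q‖ < 1) (n : ℕ) : (1 - Q ^ (n + 1)) * invP Q (n + 1) = invP Q n := by
  unfold invP
  have h0 := qPoch_self_ne hQ n
  have h1 := one_sub_pow_ne hQ n
  have : qPoch Q Q (n + 1) = qPoch Q Q n * (1 - Q ^ (n + 1)) := by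
    unfold qPoch; rw [Finset.prod_range_succ, pow_succ']
  rw [this]; field_simp

lemma invP_zero (Q : ℂ) : invP Q 0 = 1 := by simp [invP, qPoch]

lemma conv_rec {Q : ℂ} (hQ : ‖Q‖ < 1) (N : ℕ) (f : ℕ → ℂ) :
    (1 - Q ^ (N + 1)) * ∑ m ∈ range (N + 2), invP Q m * invP Q (N + 1 - m) * f m =
      ∑ m ∈ range (N + 1), invP Q m * invP Q (N - m) * (Q ^ m * f m + f (m + 1)) := by
  have key : ∀ m ∈ range (N + 2), (1 - Q ^ (N + 1)) * (invP Q m * invP Q (N + 1 - m) * f m) =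
      Q ^ m * (1 - Q ^ (N + 1 - m)) * invP Q m * invP Q (N + 1 - m) * f m +
      (1 - Q ^ m) * invP Q m * invP Q (N + 1 - m) * f m := by
    intro m hm
    have hm' : m ≤ N + 1 := by simpa [Nat.lt_succ_iff] using hm
    have : Q ^ (N + 1) = Q ^ m * Q ^ (N + 1 - m) := by rw [← pow_add]; congr 1; omega
    rw [this]; ring
  rw [Finset.mul_sum, Finset.sum_congr rfl key, Finset.sum_add_distrib]
  rw [Finset.sum_range_succ, Finset.sum_range_succ' (n := N + 1)]
  simp only [Nat.sub_self, pow_zero, sub_self, mul_zero, zero_mul, add_zero]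
  rw [← Finset.sum_add_distrib]
  refine Finset.sum_congr rfl fun m hm => ?_
  have hm' : m ≤ N := by simpa [Nat.lt_succ_iff] using hm
  have h1 : N + 1 - m = (N - m) + 1 := by omega
  have h2 : N + 1 - (m + 1) = N - m := by omega
  rw [h2, invP_rec hQ, h1, ← invP_rec hQ (N - m)]
  ring

lemma vander {Q : ℂ} (hQ : ‖Q‖ < 1) (N : ℕ) : ∀ c : ℕ,
    ∑ m ∈ range (N + 1), invP Q m * invP Q (N - m) * (Q ^ (m * (m + c)) * invP Q (m + c)) =
      invP Q N * invP Q (N + c) := by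
  induction N with
  | zero => intro c; simp [invP_zero]
  | succ N ih =>
    intro c
    apply mul_left_cancel₀ (one_sub_pow_ne hQ N)
    rw [conv_rec hQ, ← mul_assoc, invP_rec hQ, show N + 1 + c = N + (c + 1) by ring, ← ih (c + 1)]
    refine Finset.sum_congr rfl fun m hm => ?_
    congr 1
    rw [show m + 1 + c = m + c + 1 by ring, ← invP_rec hQ (m + c), show m + (c + 1) = m + c + 1 by ring]
    ring

lemma qbinom {Q : ℂ} (hQ : ‖Q‖ < 1) (N : ℕ) : ∀ x : ℂ,
    ∑ m ∈ range (N + 1), invP Q m * invP Q (N - m) * ((-x) ^ m * Q ^ (m.choose 2)) =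
      invP Q N * qPoch x Q N := by
  induction N with
  | zero => intro c; simp [invP_zero, qPoch]
  | succ N ih =>
    intro x
    apply mul_left_cancel₀ (one_sub_pow_ne hQ N)
    have : qPoch x Q (N + 1) = (1 - x) * qPoch (x * Q) Q N := by
      unfold qPoch
      rw [Finset.prod_range_succ', mul_comm]
      simp [pow_succ', mul_assoc]
    rw [conv_rec hQ, ← mul_assoc, invP_rec hQ, this, mul_left_comm, ← ih (x * Q), Finset.mul_sum]
    refine Finset.sum_congr rfl fun m hm => ?_
    rw [Nat.choose_succ_succ' m 1, Nat.choose_one_right, pow_add, pow_succ (-x),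
      show -(x * Q) = (-x) * Q by ring, mul_pow]
    ring

noncomputable def eZ (Q : ℂ) (n : ℤ) : ℂ := if 0 ≤ n then invP Q n.toNat else 0

lemma eZ_nat (Q : ℂ) (n : ℕ) : eZ Q n = invP Q n := by simp [eZ]
lemma eZ_neg (Q : ℂ) {n : ℤ} (h : n < 0) : eZ Q n = 0 := by simp [eZ, not_le.mpr h]

noncomputable def wt (q : ℂ) (r : ℤ) : ℂ := (-1) ^ r.natAbs * q ^ (r.natAbs ^ 2)

lemma qPoch_neg {q : ℂ} (h0 : q ≠ 0) (n : ℕ) :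
    qPoch (q * (q ^ (2 * n))⁻¹) (q ^ 2) (2 * n) =
      (-1) ^ n * (q ^ (n ^ 2))⁻¹ * qPoch q (q ^ 2) n ^ 2 := by
  have h1 : qPoch (q * (q ^ (2 * n))⁻¹) (q ^ 2) (2 * n) =
      qPoch (q * (q ^ (2 * n))⁻¹) (q ^ 2) n * qPoch q (q ^ 2) n := by
    unfold qPoch
    rw [two_mul, Finset.prod_range_add]
    congr 1
    refine Finset.prod_congr rfl fun m _ => ?_
    field_simp
    ring
  have h2 : qPoch (q * (q ^ (2 * n))⁻¹) (q ^ 2) n =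
      (-1) ^ n * (q ^ (n ^ 2))⁻¹ * qPoch q (q ^ 2) n := by
    clear h1
    induction n with
    | zero => simp [qPoch]
    | succ n ih =>
      have e1 : qPoch (q * (q ^ (2 * (n + 1)))⁻¹) (q ^ 2) (n + 1) =
          (1 - (q * (q ^ (2 * (n + 1)))⁻¹)) * qPoch (q * (q ^ (2 * n))⁻¹) (q ^ 2) n := by
        unfold qPoch
        rw [Finset.prod_range_succ', mul_comm]
        congr 1
        · simp
        · refine Finset.prod_congr rfl fun m _ => ?_
          field_simp
          ring
      have e2 : qPoch q (q ^ 2) (n + 1) = qPoch q (q ^ 2) n * (1 - q * (q ^ 2) ^ n) := by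
        unfold qPoch; rw [Finset.prod_range_succ]
      rw [e1, e2, ih, show q ^ (n + 1) ^ 2 = q ^ (n ^ 2) * q ^ (2 * n) * q by ring]
      field_simp
      ring
  rw [h1, h2]; ring

lemma jtp_fin0 {q : ℂ} (h0 : q ≠ 0) (hq : ‖q ^ 2‖ < 1) (n : ℕ) :
    ∑ m ∈ range (2 * n + 1), invP (q ^ 2) m * invP (q ^ 2) (2 * n - m) * wt q ((m : ℤ) - n) =
      invP (q ^ 2) (2 * n) * qPoch q (q ^ 2) n ^ 2 := by
  have h := qbinom hq (2 * n) (q * (q ^ (2 * n))⁻¹)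
  rw [qPoch_neg h0] at h
  have h3 : invP (q ^ 2) (2 * n) * qPoch q (q ^ 2) n ^ 2 = ((-1) ^ n * q ^ (n ^ 2)) *
     (invP (q ^ 2) (2 * n) * ((-1) ^ n * (q ^ n ^ 2)⁻¹ * qPoch q (q ^ 2) n ^ 2)) := by
    have : ((-1 : ℂ) ^ n) * (-1) ^ n = 1 := by rw [← mul_pow]; simp
    field_simp
    linear_combination (-invP (q ^ 2) (2 * n) * qPoch q (q ^ 2) n ^ 2) * this
  rw [h3, ← h, Finset.mul_sum]
  refine Finset.sum_congr rfl fun m _ => ?_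
  have hw : wt q ((m : ℤ) - n) = ((-1) ^ n * q ^ (n ^ 2)) *
      ((-(q * (q ^ (2 * n))⁻¹)) ^ m * (q ^ 2) ^ (m.choose 2)) := by
    have hc : (q ^ 2) ^ (m.choose 2) * q ^ m = q ^ (m ^ 2) := by
      rw [← pow_mul, ← pow_add]; congr 1
      rw [Nat.choose_two_right, Nat.mul_div_cancel' (Nat.even_mul_pred_self m).two_dvd]
      cases m with
      | zero => rfl
      | succ k => simp; ring
    have hs : ((-1 : ℂ)) ^ ((m : ℤ) - n).natAbs = (-1) ^ n * (-1) ^ m := by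
      rw [← pow_add]
      rcases Nat.even_or_odd (n + m) with he | he
      · have : Even ((m : ℤ) - n).natAbs := by grind
        rw [he.neg_one_pow, this.neg_one_pow]
      · have : Odd ((m : ℤ) - n).natAbs := by grind
        rw [he.neg_one_pow, this.neg_one_pow]
    have hp : q ^ (((m : ℤ) - n).natAbs ^ 2) * q ^ (2 * n * m) = q ^ (n ^ 2) * q ^ (m ^ 2) := by
      rw [← pow_add, ← pow_add]; congr 1
      zify; rw [sq_abs]; ring
    unfold wt
    rw [hs, neg_eq_neg_one_mul (q * _), mul_pow, mul_pow, inv_pow, ← pow_mul]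
    have hq2 : q ^ (2 * n * m) ≠ 0 := pow_ne_zero _ h0
    field_simp
    rw [hp, ← hc]; ring
  rw [hw]; ring

lemma jtp_fin {q : ℂ} (h0 : q ≠ 0) (hq : ‖q ^ 2‖ < 1) (n M : ℕ) (hnM : n ≤ M) :
    ∑ r ∈ Icc (-(M : ℤ)) M, wt q r * eZ (q ^ 2) (n - r) * eZ (q ^ 2) (n + r) =
      invP (q ^ 2) (2 * n) * qPoch q (q ^ 2) n ^ 2 := by
  rw [← jtp_fin0 h0 hq]
  have hsub : Icc (-(n : ℤ)) n ⊆ Icc (-(M : ℤ)) M := by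
    apply Finset.Icc_subset_Icc <;> omega
  rw [← Finset.sum_subset hsub]
  · refine Finset.sum_bij' (fun r _ => (r + n).toNat) (fun m _ => (m : ℤ) - n) ?_ ?_ ?_ ?_ ?_
    · intro r hr; simp only [Finset.mem_Icc, Finset.mem_range] at *; omega
    · intro r hr; simp only [Finset.mem_Icc, Finset.mem_range] at *; omega
    · intro r hr; simp only [Finset.mem_Icc] at *; omega
    · intro r hr; simp only [Finset.mem_range] at *; omega
    · intro r hr
      simp only [Finset.mem_Icc] at hr
      obtain ⟨m, hm⟩ : ∃ m : ℕ, r = m - n := ⟨(r + n).toNat, by omega⟩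
      subst hm
      have e1 : ((m : ℤ) - n + n).toNat = m := by omega
      have e2 : (n : ℤ) - (m - n) = ((2 * n - m : ℕ) : ℤ) := by omega
      have e3 : (n : ℤ) + (m - n) = (m : ℤ) := by omega
      rw [e1, e2, e3, eZ_nat, eZ_nat]
      ring
  · intro r _ hr
    simp only [Finset.mem_Icc, not_and_or, not_le] at hr
    rcases hr with hr | hr
    · rw [eZ_neg _ (show (n : ℤ) + r < 0 by omega), mul_zero]
    · rw [eZ_neg _ (show (n : ℤ) - r < 0 by omega), mul_zero, zero_mul]

lemma bailey_inner {Q : ℂ} (hQ : ‖Q‖ < 1) (N : ℕ) (r : ℤ) (hr : r.natAbs ≤ N) :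
    ∑ j ∈ range (N + 1), Q ^ (j ^ 2) * invP Q (N - j) * (eZ Q (j - r) * eZ Q (j + r)) =
      Q ^ (r.natAbs ^ 2) * (eZ Q (N - r) * eZ Q (N + r)) := by
  have hsym : ∀ j : ℕ, eZ Q (j - r) * eZ Q (j + r) =
      eZ Q (j - r.natAbs) * eZ Q ((j + r.natAbs : ℕ)) := by
    intro j
    rcases Int.natAbs_eq r with h | h
    · rw [Nat.cast_add, ← h]
    · have h1 : (j : ℤ) - r = ((j + r.natAbs : ℕ) : ℤ) := by omega
      have h2 : (j : ℤ) + r = j - (r.natAbs : ℤ) := by omega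
      rw [h1, h2, mul_comm]
  simp only [hsym]
  generalize r.natAbs = a at *
  obtain ⟨b, rfl⟩ := Nat.exists_eq_add_of_le hr
  rw [add_assoc, Finset.sum_range_add, Finset.sum_eq_zero, zero_add]
  · have e1 : ((a + b : ℕ) : ℤ) - a = (b : ℕ) := by omega
    rw [e1, eZ_nat, eZ_nat, show a + b + a = b + 2 * a by ring, ← vander hQ b (2 * a), Finset.mul_sum]
    refine Finset.sum_congr rfl fun m hm => ?_
    have e2 : ((a + m : ℕ) : ℤ) - a = (m : ℕ) := by omega
    have e3 : a + b - (a + m) = b - m := by omega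
    rw [e2, e3, eZ_nat, eZ_nat, show a + m + a = m + 2 * a by ring]
    ring
  · intro j hj
    simp only [Finset.mem_range] at hj
    rw [eZ_neg _ (show (j : ℤ) - a < 0 by omega)]; ring

lemma bailey_fin {q : ℂ} (h0 : q ≠ 0) (hq : ‖q ^ 2‖ < 1) (N : ℕ) :
    ∑ j ∈ range (N + 1), (q ^ 2) ^ (j ^ 2) * invP (q ^ 2) (N - j) *
        (invP (q ^ 2) (2 * j) * qPoch q (q ^ 2) j ^ 2) =
      ∑ r ∈ Icc (-(N : ℤ)) N, (wt q r * (q ^ 2) ^ (r.natAbs ^ 2)) * eZ (q ^ 2) (N - r) *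
        eZ (q ^ 2) (N + r) := by
  have h1 : ∀ j ∈ range (N + 1), (q ^ 2) ^ (j ^ 2) * invP (q ^ 2) (N - j) *
        (invP (q ^ 2) (2 * j) * qPoch q (q ^ 2) j ^ 2) =
      ∑ r ∈ Icc (-(N : ℤ)) N, wt q r * ((q ^ 2) ^ (j ^ 2) * invP (q ^ 2) (N - j) *
        (eZ (q ^ 2) (j - r) * eZ (q ^ 2) (j + r))) := by
    intro j hj
    simp only [Finset.mem_range] at hj
    rw [← jtp_fin h0 hq j N (by omega), Finset.mul_sum]
    refine Finset.sum_congr rfl fun r _ => ?_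
    ring
  rw [Finset.sum_congr rfl h1, Finset.sum_comm]
  refine Finset.sum_congr rfl fun r hr => ?_
  simp only [Finset.mem_Icc] at hr
  rw [← Finset.mul_sum, bailey_inner hq N r (by omega)]
  ring

lemma summ_aux {a q : ℂ} (hq : ‖q‖ < 1) : Summable (fun h : ℕ => ‖-(a * q ^ h)‖) := by
  simp only [norm_neg, norm_mul, norm_pow]
  exact (summable_geometric_of_lt_one (norm_nonneg _) hq).mul_left _

lemma mult_aux (a : ℂ) {q : ℂ} (hq : ‖q‖ < 1) : Multipliable (fun h : ℕ => 1 - a * q ^ h) := by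
  simpa [sub_eq_add_neg] using multipliable_one_add_of_summable (summ_aux (a := a) hq)

lemma tendsto_qPoch (a : ℂ) {q : ℂ} (hq : ‖q‖ < 1) :
    Tendsto (qPoch a q) atTop (𝓝 (qPochInf a q)) := (mult_aux a hq).tendsto_prod_tprod_nat

lemma qPochInf_ne {Q : ℂ} (hQ : ‖Q‖ < 1) : qPochInf Q Q ≠ 0 := by
  have := tprod_one_add_ne_zero_of_summable (f := fun h : ℕ => -(Q * Q ^ h)) (fun i => by
    have := one_sub_pow_ne hQ i
    rwa [pow_succ', sub_eq_add_neg] at this) (summ_aux hQ)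
  simpa [qPochInf, sub_eq_add_neg] using this

lemma tendsto_invP {Q : ℂ} (hQ : ‖Q‖ < 1) :
    Tendsto (invP Q) atTop (𝓝 (qPochInf Q Q)⁻¹) := (tendsto_qPoch Q hQ).inv₀ (qPochInf_ne hQ)

lemma bdd_of_tendsto {u : ℕ → ℂ} {x : ℂ} (h : Tendsto u atTop (𝓝 x)) :
    ∃ C : ℝ, 0 ≤ C ∧ ∀ n, ‖u n‖ ≤ C := by
  obtain ⟨C, hC⟩ := h.norm.bddAbove_range
  have : ∀ n, ‖u n‖ ≤ C := fun n => hC ⟨n, rfl⟩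
  exact ⟨C, (norm_nonneg _).trans (this 0), this⟩

lemma tendsto_eZ {Q : ℂ} (hQ : ‖Q‖ < 1) :
    Tendsto (eZ Q) atTop (𝓝 (qPochInf Q Q)⁻¹) := by
  have h1 : Tendsto Int.toNat atTop atTop := by
    refine tendsto_atTop.mpr fun b => ?_
    filter_upwards [eventually_ge_atTop (b : ℤ)] with a ha
    omega
  refine ((tendsto_invP hQ).comp h1).congr' ?_
  filter_upwards [eventually_ge_atTop (0 : ℤ)] with a ha
  simp [eZ, ha]

lemma limit_lemma {Q : ℂ} (hQ : ‖Q‖ < 1) (w : ℤ → ℂ) (hw : Summable (fun r => ‖w r‖)) :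
    Tendsto (fun N : ℕ => ∑ r ∈ Icc (-(N : ℤ)) N, w r * eZ Q (N - r) * eZ Q (N + r)) atTop
      (𝓝 ((∑' r, w r) * (qPochInf Q Q)⁻¹ ^ 2)) := by
  obtain ⟨C, hC0, hC⟩ := bdd_of_tendsto (tendsto_invP hQ)
  have hCe : ∀ n, ‖eZ Q n‖ ≤ C := by
    intro n; unfold eZ; split_ifs
    · exact hC _
    · simpa using hC0
  have h1 : ∀ N : ℕ, ∑ r ∈ Icc (-(N : ℤ)) N, w r * eZ Q (N - r) * eZ Q (N + r) =
      ∑' r, w r * eZ Q (N - r) * eZ Q (N + r) := by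
    intro N
    refine (tsum_eq_sum fun r hr => ?_).symm
    simp only [Finset.mem_Icc, not_and_or, not_le] at hr
    rcases hr with hr | hr
    · rw [eZ_neg _ (show (N : ℤ) + r < 0 by omega), mul_zero]
    · rw [eZ_neg _ (show (N : ℤ) - r < 0 by omega), mul_zero, zero_mul]
  simp only [h1]
  rw [← tsum_mul_right]
  refine tendsto_tsum_of_dominated_convergence (hw.mul_right (C ^ 2)) ?_ ?_
  · intro r
    have t1 : Tendsto (fun N : ℕ => (N : ℤ) - r) atTop atTop :=
      tendsto_atTop_add_const_right _ (-r) tendsto_natCast_atTop_atTop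
    have t2 : Tendsto (fun N : ℕ => (N : ℤ) + r) atTop atTop :=
      tendsto_atTop_add_const_right _ r tendsto_natCast_atTop_atTop
    have := (((tendsto_eZ hQ).comp t1).const_mul (w r)).mul ((tendsto_eZ hQ).comp t2)
    rw [mul_assoc, ← sq] at this
    exact this
  · refine Eventually.of_forall fun N r => ?_
    rw [norm_mul, norm_mul, mul_assoc, sq]
    gcongr
    · exact hCe _
    · exact hCe _

lemma summ_wt {q : ℂ} (hq : ‖q‖ < 1) : Summable (fun r : ℤ => ‖wt q r‖) := by
  have h : Summable (fun n : ℕ => ‖q‖ ^ (n ^ 2)) := by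
    refine Summable.of_nonneg_of_le (fun n => by positivity) (fun n => ?_)
      (summable_geometric_of_lt_one (norm_nonneg _) hq)
    exact pow_le_pow_of_le_one (norm_nonneg _) hq.le (by nlinarith)
  have e : ∀ r : ℤ, ‖wt q r‖ = ‖q‖ ^ (r.natAbs ^ 2) := by intro r; simp [wt]
  simp only [e]
  refine Summable.of_nat_of_neg ?_ ?_ <;> simpa using h

lemma jtp {q : ℂ} (h0 : q ≠ 0) (hq : ‖q‖ < 1) :
    ∑' r, wt q r = qPochInf q (q ^ 2) ^ 2 * qPochInf (q ^ 2) (q ^ 2) := by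
  have hq2 : ‖q ^ 2‖ < 1 := by rw [norm_pow]; exact pow_lt_one₀ (norm_nonneg _) hq two_ne_zero
  have h1 := limit_lemma hq2 (wt q) (summ_wt hq)
  simp only [fun n => jtp_fin h0 hq2 n n le_rfl] at h1
  have h2 : Tendsto (fun n : ℕ => 2 * n) atTop atTop :=
    tendsto_id.const_mul_atTop' two_pos
  have h3 := ((tendsto_invP hq2).comp h2).mul ((tendsto_qPoch q hq2).pow 2)
  have h4 := tendsto_nhds_unique h1 h3
  have h5 := qPochInf_ne hq2
  field_simp at h4
  rw [h4]; ring

lemma bailey_inf {q : ℂ} (h0 : q ≠ 0) (hq : ‖q‖ < 1) :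
    ∑' j : ℕ, (q ^ 2) ^ (j ^ 2) * (invP (q ^ 2) (2 * j) * qPoch q (q ^ 2) j ^ 2) =
      (∑' r, wt (q ^ 3) r) * (qPochInf (q ^ 2) (q ^ 2))⁻¹ := by
  have hq2 : ‖q ^ 2‖ < 1 := by rw [norm_pow]; exact pow_lt_one₀ (norm_nonneg _) hq two_ne_zero
  have hq3 : ‖q ^ 3‖ < 1 := by rw [norm_pow]; exact pow_lt_one₀ (norm_nonneg _) hq three_ne_zero
  have e : ∀ r : ℤ, wt (q ^ 3) r = wt q r * (q ^ 2) ^ (r.natAbs ^ 2) := by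
    intro r; unfold wt; ring
  have h1 := limit_lemma hq2 _ (summ_wt hq3)
  simp only [fun N (r : ℤ) => congrArg (fun x => x * eZ (q ^ 2) (N - r) * eZ (q ^ 2) (N + r)) (e r)] at h1
  simp only [← bailey_fin h0 hq2] at h1
  set g : ℕ → ℂ := fun j => invP (q ^ 2) (2 * j) * qPoch q (q ^ 2) j ^ 2 with hg
  have h2 : Tendsto (fun n : ℕ => 2 * n) atTop atTop :=
    tendsto_id.const_mul_atTop' two_pos
  have h3 : Tendsto g atTop _ := ((tendsto_invP hq2).comp h2).mul ((tendsto_qPoch q hq2).pow 2)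
  obtain ⟨C, hC0, hC⟩ := bdd_of_tendsto (tendsto_invP hq2)
  obtain ⟨D, hD0, hD⟩ := bdd_of_tendsto h3
  have h4 : Tendsto (fun N : ℕ => ∑' j : ℕ, (q ^ 2) ^ (j ^ 2) * eZ (q ^ 2) (N - j) * g j) atTop
      (𝓝 (∑' j : ℕ, (q ^ 2) ^ (j ^ 2) * (qPochInf (q ^ 2) (q ^ 2))⁻¹ * g j)) := by
    refine tendsto_tsum_of_dominated_convergence (bound := fun j => ‖q ^ 2‖ ^ j * C * D) ?_ ?_ ?_
    · exact ((summable_geometric_of_lt_one (norm_nonneg _) hq2).mul_right _).mul_right _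
    · intro j
      have t1 : Tendsto (fun N : ℕ => (N : ℤ) - j) atTop atTop :=
        tendsto_atTop_add_const_right _ (-(j : ℤ)) tendsto_natCast_atTop_atTop
      exact (((tendsto_eZ hq2).comp t1).const_mul _).mul_const _
    · refine Eventually.of_forall fun N j => ?_
      rw [norm_mul, norm_mul, norm_pow (q ^ 2)]
      have hp : ‖q ^ 2‖ ^ (j ^ 2) ≤ ‖q ^ 2‖ ^ j :=
        pow_le_pow_of_le_one (norm_nonneg _) hq2.le (by nlinarith)
      refine mul_le_mul (mul_le_mul hp ?_ (norm_nonneg _) (by positivity)) ?_ (norm_nonneg _)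
        (by positivity)
      · unfold eZ; split_ifs
        · exact hC _
        · simpa using hC0
      · exact hD j
  have h5 : ∀ N : ℕ, ∑' j : ℕ, (q ^ 2) ^ (j ^ 2) * eZ (q ^ 2) (N - j) * g j =
      ∑ j ∈ range (N + 1), (q ^ 2) ^ (j ^ 2) * invP (q ^ 2) (N - j) * g j := by
    intro N
    rw [tsum_eq_sum (s := range (N + 1))]
    · refine Finset.sum_congr rfl fun j hj => ?_
      simp only [Finset.mem_range] at hj
      rw [show (N : ℤ) - j = ((N - j : ℕ) : ℤ) by omega, eZ_nat]
    · intro j hj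
      simp only [Finset.mem_range] at hj
      rw [eZ_neg _ (by omega)]; ring
  simp only [h5] at h4
  have h6 := tendsto_nhds_unique h4 h1
  have h7 := qPochInf_ne hq2
  simp only [mul_right_comm _ (qPochInf (q ^ 2) (q ^ 2))⁻¹] at h6
  rw [tsum_mul_right] at h6
  field_simp at h6
  rw [← div_eq_mul_inv, eq_div_iff h7]
  exact h6

lemma qPoch_double (q : ℂ) (j : ℕ) :
    qPoch (q ^ 2) (q ^ 2) (2 * j) =
      qPoch q (q ^ 2) j * qPoch (q ^ 2) (q ^ 2) j * qPoch (-q) q (2 * j) := by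
  induction j with
  | zero => simp [qPoch]
  | succ j ih =>
    unfold qPoch at *
    rw [show 2 * (j + 1) = 2 * j + 1 + 1 by ring]
    simp only [Finset.prod_range_succ, ih]
    ring

lemma qPochInf_shift {q : ℂ} (hq : ‖q‖ < 1) (k : ℕ) :
    qPoch (-q) q k * qPochInf (-(q ^ (k + 1))) q = qPochInf (-q) q := by
  have := Multipliable.prod_mul_tprod_nat_mul' (f := fun h : ℕ => 1 - (-q) * q ^ h) (k := k) (by
    convert mult_aux (-(q ^ (k + 1))) hq using 2
    ring)
  unfold qPoch qPochInf
  rw [← this]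
  congr 1
  refine tprod_congr fun h => ?_
  ring

lemma qPochInf_sq {q : ℂ} (hq : ‖q‖ < 1) :
    qPochInf q q * qPochInf (-q) q = qPochInf (q ^ 2) (q ^ 2) := by
  unfold qPochInf
  rw [← (mult_aux q hq).tprod_mul (mult_aux (-q) hq)]
  refine tprod_congr fun h => ?_
  ring

lemma qPochInf_even_odd {q : ℂ} (hq : ‖q‖ < 1) :
    qPochInf q (q ^ 2) * qPochInf (q ^ 2) (q ^ 2) = qPochInf q q := by
  have hq2 : ‖q ^ 2‖ < 1 := by rw [norm_pow]; exact pow_lt_one₀ (norm_nonneg _) hq two_ne_zero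
  have e1 : (fun k : ℕ => 1 - q * q ^ (2 * k)) = fun k => 1 - q * (q ^ 2) ^ k := by
    ext k; ring
  have e2 : (fun k : ℕ => 1 - q * q ^ (2 * k + 1)) = fun k => 1 - q ^ 2 * (q ^ 2) ^ k := by
    ext k; ring
  have := tprod_even_mul_odd (f := fun h : ℕ => 1 - q * q ^ h) (e1 ▸ mult_aux q hq2)
    (e2 ▸ mult_aux (q ^ 2) hq2)
  simp only [e1, e2] at this
  exact this

/-- The third member of the modulus 6 family (McLaughlin's identity). -/
theorem mcLaughlin_mod6 (q : ℂ) (hq : ‖q‖ < 1) :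
    ∑' j : ℕ, q ^ (2 * j ^ 2) * qPoch q (q ^ 2) j * qPochInf (-(q ^ (2 * j + 1))) q /
        qPoch (q ^ 2) (q ^ 2) j =
      ∏' j : ℕ, (1 - q ^ (3 * (j + 1))) * (1 - q ^ (6 * (j + 1) - 3)) / (1 - q ^ (j + 1)) := by
  rcases eq_or_ne q 0 with rfl | h0
  · rw [tsum_eq_single 0]
    · have : ∀ j : ℕ, 6 * (j + 1) - 3 ≠ 0 := fun j => by omega
      simp [qPoch, qPochInf, this]
    · intro j hj
      simp [hj]
  have hq2 : ‖q ^ 2‖ < 1 := by rw [norm_pow]; exact pow_lt_one₀ (norm_nonneg _) hq two_ne_zero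
  have hq3 : ‖q ^ 3‖ < 1 := by rw [norm_pow]; exact pow_lt_one₀ (norm_nonneg _) hq three_ne_zero
  have hq6 : ‖(q ^ 3) ^ 2‖ < 1 := by
    rw [norm_pow]; exact pow_lt_one₀ (norm_nonneg _) hq3 two_ne_zero
  have hR : ∏' j : ℕ, (1 - q ^ (3 * (j + 1))) * (1 - q ^ (6 * (j + 1) - 3)) / (1 - q ^ (j + 1)) =
      qPochInf (q ^ 3) (q ^ 3) * qPochInf (q ^ 3) ((q ^ 3) ^ 2) / qPochInf q q := by
    have m1 := mult_aux (q ^ 3) hq3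
    have m2 := mult_aux (q ^ 3) hq6
    have m3 := mult_aux q hq
    have := qPochInf_ne hq
    unfold qPochInf at *
    rw [← m1.tprod_mul m2, ← (m1.mul m2).tprod_div₀ m3 this]
    refine tprod_congr fun j => ?_
    rw [show 6 * (j + 1) - 3 = 6 * j + 3 by omega]
    ring
  have hL : ∀ j : ℕ, q ^ (2 * j ^ 2) * qPoch q (q ^ 2) j * qPochInf (-(q ^ (2 * j + 1))) q /
        qPoch (q ^ 2) (q ^ 2) j = qPochInf (-q) q *
        ((q ^ 2) ^ (j ^ 2) * (invP (q ^ 2) (2 * j) * qPoch q (q ^ 2) j ^ 2)) := by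
    intro j
    have n1 := qPoch_self_ne hq2 j
    have n2 := qPoch_self_ne hq2 (2 * j)
    rw [qPoch_double] at n2
    have n3 := right_ne_zero_of_mul n2
    have n4 := left_ne_zero_of_mul (left_ne_zero_of_mul n2)
    unfold invP
    rw [← qPochInf_shift hq (2 * j), qPoch_double, pow_mul]
    field_simp
  simp only [hL, hR]
  rw [tsum_mul_left, bailey_inf h0 hq, jtp (pow_ne_zero 3 h0) hq3, ← qPochInf_sq hq,
    ← qPochInf_even_odd hq3]
  have k1 := qPochInf_ne hq2
  rw [← qPochInf_sq hq] at k1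
  have k2 := right_ne_zero_of_mul k1
  have k3 := left_ne_zero_of_mul k1
  field_simp
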